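/- Let H be a frustration-free Hamiltonian on a chain of n qudits as in the setup, with spectral gap γ and local gaps γ(t), and let H̄(t) be the coarse-grained Hamiltonian with spectral gap γ(H̄(t)), for a coarse-graining parameter t with 8L² < t < n/5. If γ(t) > 0, then γ(H̄(t)) ≤ 2γ/γ(t). -/

import Mathlib

open scoped ComplexOrder
open scoped Fin.NatCast

variable {E : Type*} [NormedAddCommGroup E] [InnerProductSpace ℂ E] [FiniteDimensional ℂ E]

/-- An orthogonal projector: a self-adjoint idempotent operator. -/
def IsProjector (P : E →L[ℂ] E) : Prop := IsSelfAdjoint P ∧ P * P = P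

/-- The smallest nonzero (for a positive semidefinite operator, smallest positive)
eigenvalue of an operator. -/
noncomputable def minNonzeroEig (A : E →L[ℂ] E) : ℝ :=
  sInf {c : ℝ | 0 < c ∧ ∃ v : E, v ≠ 0 ∧ A v = (c : ℂ) • v}

/-- The Loewner order: `A ⪯ B` iff `B − A` is positive semidefinite. -/
def Loewner (A B : E →L[ℂ] E) : Prop := (B - A).IsPositive

/-- The contiguous (cyclic) segment of `t` qudits starting at qudit `a` of the chain. -/
def seg {n : ℕ} [NeZero n] (a : Fin n) (t : ℕ) : Finset (Fin n) :=
  (Finset.range t).image (fun k : ℕ => a + (k : Fin n))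

/-- The bond `(i, i+1)` lies inside the region `F`. -/
def bondIn {n : ℕ} [NeZero n] (i : Fin n) (F : Finset (Fin n)) : Prop := i ∈ F ∧ i + 1 ∈ F

instance {n : ℕ} [NeZero n] (F : Finset (Fin n)) : DecidablePred (fun i => bondIn i F) :=
  fun i => inferInstanceAs (Decidable (i ∈ F ∧ i + 1 ∈ F))

/-- A frustration-free nearest-neighbour Hamiltonian `H = Σ_{i=1}^n H_i`,
`H_i = Σ_j P_{ij}`, on a (cyclic) chain of `n` qudits whose joint Hilbert space is `E`:
the `P_{ij}` are orthogonal projectors supported on the qudits `i, i+1`, each failing to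
commute with at most `g` other members of the family, and the family is partitioned into
`L` layers of pairwise commuting projectors. -/
structure ChainSetup (n : ℕ) [NeZero n] (E : Type*) [NormedAddCommGroup E]
    [InnerProductSpace ℂ E] [FiniteDimensional ℂ E] where
  /-- the number of projectors making up the interaction `H_i` on the bond `(i, i+1)` -/
  m : Fin n → ℕ
  /-- the projectors `P_{ij}`, supported on the qudits `i, i+1` -/
  P : (i : Fin n) → Fin (m i) → (E →L[ℂ] E)
  /-- the noncommutation degree -/
  g : ℕ
  /-- the number of layers -/
  L : ℕ
  /-- the assignment of each projector to a layer -/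
  layer : ((i : Fin n) × Fin (m i)) → Fin L
  proj : ∀ i j, IsProjector (P i j)
  /-- operational form of two-body locality: interactions on disjoint bonds commute -/
  locality : ∀ (i i' : Fin n) (j : Fin (m i)) (j' : Fin (m i')),
    Disjoint ({i, i + 1} : Finset (Fin n)) ({i', i' + 1} : Finset (Fin n)) →
    Commute (P i j) (P i' j')
  /-- each projector fails to commute with at most `g` other members of the family -/
  gbound : ∀ p : (i : Fin n) × Fin (m i),
    Nat.card {q : (i : Fin n) × Fin (m i) // q ≠ p ∧ ¬ Commute (P p.1 p.2) (P q.1 q.2)} ≤ g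
  /-- projectors within each layer pairwise commute -/
  layers : ∀ p q : (i : Fin n) × Fin (m i), layer p = layer q →
    Commute (P p.1 p.2) (P q.1 q.2)
  /-- frustration-freeness: there is a nonzero state annihilated by every `P_{ij}` -/
  frustFree : ∃ v : E, v ≠ 0 ∧ ∀ i j, P i j v = 0

namespace ChainSetup

variable {n : ℕ} [NeZero n]

/-- the bond interaction `H_i = Σ_j P_{ij}` -/
noncomputable def Hbond (C : ChainSetup n E) (i : Fin n) : E →L[ℂ] E := ∑ j, C.P i j

/-- the full Hamiltonian `H = Σ_i H_i` -/
noncomputable def Hfull (C : ChainSetup n E) : E →L[ℂ] E := ∑ i, C.Hbond i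

/-- `h_F = Σ_{i : i,i+1 ∈ F} H_i`, the Hamiltonian restricted to the region `F` -/
noncomputable def hamOn (C : ChainSetup n E) (F : Finset (Fin n)) : E →L[ℂ] E :=
  ∑ i ∈ Finset.univ.filter (fun i => bondIn i F), C.Hbond i

/-- the spectral gap `γ` of `H` -/
noncomputable def gap (C : ChainSetup n E) : ℝ := minNonzeroEig C.Hfull

/-- The local gap `γ(t)`: the minimum of the spectral gaps of `h_S` over contiguous
segments `S` of length `t`.  For the open chain (`openBC = true`) only segments that do
not wrap around the end of the chain are allowed. -/
noncomputable def localGap (C : ChainSetup n E) (openBC : Bool) (t : ℕ) : ℝ :=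
  sInf {x : ℝ | ∃ a : Fin n, (openBC = true → (a : ℕ) + t ≤ n) ∧
    x = minNonzeroEig (C.hamOn (seg a t))}

/-- `Q_F`: the orthogonal projector onto the orthogonal complement of the ground space of
`h_F` (for `F = ∅` this is `0`). -/
noncomputable def Qproj (C : ChainSetup n E) (F : Finset (Fin n)) : E →L[ℂ] E :=
  (LinearMap.ker (C.hamOn F : E →ₗ[ℂ] E))ᗮ.subtypeL ∘L
    Submodule.orthogonalProjection (LinearMap.ker (C.hamOn F : E →ₗ[ℂ] E))ᗮ

end ChainSetup

/-- the cyclic successor on `Fin M` -/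
def cyc {M : ℕ} (k : Fin M) : Fin M := ⟨((k : ℕ) + 1) % M, Nat.mod_lt _ k.pos⟩

/-- A coarse-graining configuration with parameter `t` on a chain of `n` qudits:
`⌊n/t⌋` pairwise disjoint contiguous segments `S_k = seg (s k) t` of length `t` in cyclic
order, with `r_k ≤ t/4` qudits between consecutive segments, and pairwise disjoint
contiguous segments `T_k` of length `t` placed between consecutive `S`-segments, each
overlapping `S_k` and `S_{k+1}` in at least `⌊t/4⌋` qudits.  For the open chain, exactly the
last `T`-segment is empty, `S_1` starts at the first qudit and `S_{⌊n/t⌋}` ends at the last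
qudit. -/
structure CoarseGraining (n : ℕ) [NeZero n] (t : ℕ) where
  /-- the number of `S`-segments, `⌊n/t⌋` -/
  M : ℕ
  hM : M = n / t
  hMpos : 0 < M
  /-- the starting points of the `S`-segments -/
  s : Fin M → Fin n
  /-- the numbers `r_k` of qudits sandwiched between consecutive `S`-segments -/
  r : Fin M → ℕ
  hr : ∀ k, 4 * r k ≤ t
  /-- the `S`-segments appear in cyclic order, `S_{k+1}` starting `t + r_k` after `S_k` -/
  hs : ∀ k : Fin M, s (cyc k) = s k + ((t + r k : ℕ) : Fin n)
  hSdisj : ∀ k l : Fin M, k ≠ l → Disjoint (seg (s k) t) (seg (s l) t)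
  /-- the `T`-segments -/
  T : Fin M → Finset (Fin n)
  hT : ∀ k, (∃ a : Fin n, T k = seg a t) ∨ T k = ∅
  hTdisj : ∀ k l : Fin M, k ≠ l → Disjoint (T k) (T l)
  hoverlap₁ : ∀ k, T k ≠ ∅ → t / 4 ≤ ((seg (s k) t) ∩ T k).card
  hoverlap₂ : ∀ k, T k ≠ ∅ → t / 4 ≤ ((seg (s (cyc k)) t) ∩ T k).card
  /-- only the last `T`-segment may be empty (the open-chain case), and in that case
  `S_1` starts at the first qudit and `S_M` ends at the last qudit -/
  hTempty : ∀ k, T k = ∅ → (k : ℕ) = M - 1 ∧ (s ⟨0, hMpos⟩ : ℕ) = 0 ∧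
    (s ⟨M - 1, Nat.sub_lt hMpos one_pos⟩ : ℕ) + t = n

namespace ChainSetup

variable {n : ℕ} [NeZero n]

/-- the coarse-grained Hamiltonian `H̄(t) = Σ_k (Q_{S_k} + Q_{T_k})` -/
noncomputable def coarseHam (C : ChainSetup n E) (t : ℕ) (G : CoarseGraining n t) :
    E →L[ℂ] E :=
  ∑ k, (C.Qproj (seg (G.s k) t) + C.Qproj (G.T k))

/-- the coarse-grained detectability operator
`DL(t) = (∏_k (1 − Q_{S_k}))·(∏_k (1 − Q_{T_k}))` -/
noncomputable def coarseDL (C : ChainSetup n E) (t : ℕ) (G : CoarseGraining n t) :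
    E →L[ℂ] E :=
  ((List.finRange G.M).map (fun k => 1 - C.Qproj (seg (G.s k) t))).prod *
    ((List.finRange G.M).map (fun k => 1 - C.Qproj (G.T k))).prod

/-- the detectability-lemma operator `DL(H) = ∏_{α=1}^L ∏_{(i,j) ∈ T_α} (1 − P_{ij})`,
taken layer by layer -/
noncomputable def DLHam (C : ChainSetup n E) : E →L[ℂ] E :=
  ((List.finRange C.L).map (fun α =>
    (Finset.univ.filter (fun p : (i : Fin n) × Fin (C.m i) => C.layer p = α)).noncommProd
      (fun p => 1 - C.P p.1 p.2)
      (fun p hp q hq _ =>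
        Commute.sub_left (Commute.one_left _)
          (Commute.sub_right (Commute.one_right _)
            (C.layers p q (by
              simp only [Finset.coe_filter, Set.mem_setOf_eq] at hp hq
              rw [hp.2, hq.2])))))).prod

end ChainSetup

/-!
Each `h_S` satisfies `γ(t) Q_S ≤ h_S` in the Loewner order.  The `S`-segments are pairwise
disjoint, so the sum of the `h_{S_k}` is at most `H`; the same holds for the `T`-segments, and
therefore `γ(t) H̄(t) ≤ 2 H`.  Every bond with a nonzero interaction lies inside some `S_k` or
`T_k`, so `ker H̄(t) ⊆ ker H`.  An eigenvector of `H` with eigenvalue `γ` is then orthogonal to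
`ker H̄(t)`, and testing the operator inequality on it gives `γ(t) γ(H̄(t)) ≤ 2 γ`.
-/

section LoewnerOrder

theorem reApplyInnerSelf_le_of_le {𝕜 V : Type*} [RCLike 𝕜] [NormedAddCommGroup V]
    [InnerProductSpace 𝕜 V] {A B : V →L[𝕜] V} (h : A ≤ B) (v : V) :
    A.reApplyInnerSelf v ≤ B.reApplyInnerSelf v := by
  have hpos : 0 ≤ RCLike.re (inner 𝕜 ((B - A) v) v) := h.re_inner_nonneg_left v
  rw [sub_apply, inner_sub_left, map_sub, sub_nonneg] at hpos
  exact hpos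

theorem ker_le_ker_of_nonneg_of_le {V : Type*} [NormedAddCommGroup V] [InnerProductSpace ℂ V]
    [CompleteSpace V] {A B : V →L[ℂ] V} (hA : 0 ≤ A) (hAB : A ≤ B) : B.ker ≤ A.ker := by
  intro v hv
  obtain ⟨R, rfl⟩ := CStarAlgebra.nonneg_iff_eq_star_mul_self.mp hA
  have hform : (star R * R).reApplyInnerSelf v = ‖R v‖ ^ 2 := by
    simp [ContinuousLinearMap.reApplyInnerSelf_apply, ContinuousLinearMap.star_eq_adjoint,
      ContinuousLinearMap.adjoint_inner_left, inner_self_eq_norm_sq_to_K, ← Complex.ofReal_pow]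
  have hle := reApplyInnerSelf_le_of_le hAB v
  have hBv : B v = 0 := hv
  have hRv : R v = 0 := by
    rw [hform, ContinuousLinearMap.reApplyInnerSelf_apply, hBv, inner_zero_left, map_zero] at hle
    simpa using le_antisymm hle (sq_nonneg _)
  simp [hRv]

end LoewnerOrder

section SpectralGap

theorem re_inner_apply_self_eq_sum_eigenvalues {𝕜 V : Type*} [RCLike 𝕜] [NormedAddCommGroup V]
    [InnerProductSpace 𝕜 V] [FiniteDimensional 𝕜 V] {T : V →ₗ[𝕜] V} (hT : T.IsSymmetric) (v : V) :
    RCLike.re (inner 𝕜 (T v) v) =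
      ∑ i, hT.eigenvalues rfl i * ‖inner 𝕜 (hT.eigenvectorBasis rfl i) v‖ ^ 2 := by
  rw [← (hT.eigenvectorBasis rfl).sum_inner_mul_inner (T v) v, map_sum]
  refine Finset.sum_congr rfl fun i _ => ?_
  rw [hT v, hT.apply_eigenvectorBasis, inner_smul_right, mul_assoc, RCLike.re_ofReal_mul,
    inner_mul_symm_re_eq_norm, norm_mul, norm_inner_symm v, sq]

variable {V : Type*} [NormedAddCommGroup V] [InnerProductSpace ℂ V]

theorem minNonzeroEig_nonneg (A : V →L[ℂ] V) : 0 ≤ minNonzeroEig A :=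
  Real.sInf_nonneg fun _ hc => hc.1.le

theorem minNonzeroEig_le {A : V →L[ℂ] V} {c : ℝ} (hc : 0 < c) {v : V} (hv : v ≠ 0)
    (hAv : A v = (c : ℂ) • v) : minNonzeroEig A ≤ c :=
  csInf_le ⟨0, fun _ hx => hx.1.le⟩ ⟨hc, v, hv, hAv⟩

theorem minNonzeroEig_zero : minNonzeroEig (0 : V →L[ℂ] V) = 0 := by
  have hempty : {c : ℝ | 0 < c ∧ ∃ v : V, v ≠ 0 ∧ (0 : V →L[ℂ] V) v = (c : ℂ) • v} = ∅ := by
    refine Set.eq_empty_of_forall_notMem fun c ⟨hc, v, hv, hAv⟩ => ?_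
    exact smul_ne_zero (Complex.ofReal_ne_zero.mpr hc.ne') hv hAv.symm
  rw [minNonzeroEig, hempty, Real.sInf_empty]

theorem mem_orthogonal_ker_of_apply_eq_smul {A : V →L[ℂ] V}
    (hA : (A : V →ₗ[ℂ] V).IsSymmetric) {c : ℂ} (hc : c ≠ 0) {v : V} (hAv : A v = c • v) :
    v ∈ A.kerᗮ := by
  rw [← hA.orthogonal_range]
  exact Submodule.le_orthogonal_orthogonal _ ⟨c⁻¹ • v, by simp [hAv, hc]⟩

variable [FiniteDimensional ℂ V]

theorem exists_pos_eigenvalue {A : V →L[ℂ] V} (hA : 0 ≤ A) (hA0 : A ≠ 0) :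
    ∃ c : ℝ, 0 < c ∧ ∃ v : V, v ≠ 0 ∧ A v = (c : ℂ) • v := by
  have hpos := A.nonneg_iff_isPositive.mp hA
  have hsymm := hpos.isSymmetric
  let b := hsymm.eigenvectorBasis rfl
  obtain ⟨i, hi⟩ : ∃ i, hsymm.eigenvalues rfl i ≠ 0 := by
    by_contra! hzero
    refine hA0 (ContinuousLinearMap.coe_injective (b.toBasis.ext fun i => ?_))
    simp [b, hsymm.apply_eigenvectorBasis, hzero i]
  exact ⟨_, (LinearMap.IsPositive.nonneg_eigenvalues hpos rfl i).lt_of_ne' hi, b i,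
    b.orthonormal.ne_zero i, hsymm.apply_eigenvectorBasis rfl i⟩

theorem minNonzeroEig_mul_norm_sq_le {A : V →L[ℂ] V} (hA : 0 ≤ A) {v : V} (hv : v ∈ A.kerᗮ) :
    minNonzeroEig A * ‖v‖ ^ 2 ≤ A.reApplyInnerSelf v := by
  have hpos := A.nonneg_iff_isPositive.mp hA
  let b := hpos.isSymmetric.eigenvectorBasis rfl
  let eig := hpos.isSymmetric.eigenvalues rfl
  have hAb (i) : A (b i) = (eig i : ℂ) • b i := hpos.isSymmetric.apply_eigenvectorBasis rfl i
  have hexpand : A.reApplyInnerSelf v = ∑ i, eig i * ‖inner ℂ (b i) v‖ ^ 2 :=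
    re_inner_apply_self_eq_sum_eigenvalues hpos.isSymmetric v
  rw [hexpand, ← b.sum_sq_norm_inner_right v, Finset.mul_sum]
  refine Finset.sum_le_sum fun i _ => ?_
  have heig : 0 ≤ eig i := LinearMap.IsPositive.nonneg_eigenvalues hpos rfl i
  rcases heig.eq_or_lt with hzero | heig_pos
  · have hort : inner ℂ (b i) v = 0 := hv (b i) (by simp [hAb, ← hzero])
    simp [hort]
  · gcongr
    exact minNonzeroEig_le heig_pos (b.orthonormal.ne_zero i) (hAb i)

theorem apply_starProjection_orthogonal_ker (A : V →L[ℂ] V) (v : V) :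
    A (A.kerᗮ.starProjection v) = A v := by
  have hker : v - A.kerᗮ.starProjection v ∈ A.ker := by
    simp
  rw [LinearMap.mem_ker, map_sub, sub_eq_zero] at hker
  exact hker.symm

theorem minNonzeroEig_mul_norm_starProjection_sq_le {A : V →L[ℂ] V} (hA : 0 ≤ A) (v : V) :
    minNonzeroEig A * ‖A.kerᗮ.starProjection v‖ ^ 2 ≤ A.reApplyInnerSelf v := by
  have hpos := A.nonneg_iff_isPositive.mp hA
  have hform : A.reApplyInnerSelf (A.kerᗮ.starProjection v) = A.reApplyInnerSelf v := by
    simp only [ContinuousLinearMap.reApplyInnerSelf_apply, apply_starProjection_orthogonal_ker]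
    rw [hpos.inner_left_eq_inner_right, apply_starProjection_orthogonal_ker,
      ← hpos.inner_left_eq_inner_right]
  exact (minNonzeroEig_mul_norm_sq_le hA (Submodule.starProjection_apply_mem _ v)).trans_eq hform

theorem minNonzeroEig_smul_starProjection_le {A : V →L[ℂ] V} (hA : 0 ≤ A) :
    minNonzeroEig A • A.kerᗮ.starProjection ≤ A := by
  have hself : IsSelfAdjoint (A - minNonzeroEig A • A.kerᗮ.starProjection) :=
    (A.nonneg_iff_isPositive.mp hA).isSelfAdjoint.sub
      ((IsSelfAdjoint.all (minNonzeroEig A)).smul (isSelfAdjoint_starProjection A.kerᗮ))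
  rw [ContinuousLinearMap.le_def, ContinuousLinearMap.isPositive_def']
  refine ⟨hself, fun v => ?_⟩
  have hproj : RCLike.re (inner ℂ (A.kerᗮ.starProjection v) v) =
      ‖A.kerᗮ.starProjection v‖ ^ 2 :=
    Submodule.re_inner_starProjection_eq_normSq _ _
  have hgap := minNonzeroEig_mul_norm_starProjection_sq_le hA v
  rw [← hproj] at hgap
  generalize A.kerᗮ.starProjection = Q at hgap ⊢
  simpa [ContinuousLinearMap.reApplyInnerSelf_apply, inner_sub_left] using hgap

theorem mul_minNonzeroEig_le_of_smul_le {A B : V →L[ℂ] V} {a : ℝ} (ha : 0 ≤ a) (hB : 0 ≤ B)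
    (hA : A ≠ 0) (hker : B.ker ≤ A.ker) (hle : a • B ≤ A) :
    a * minNonzeroEig B ≤ minNonzeroEig A := by
  have hA_nonneg : 0 ≤ A := (smul_nonneg ha hB).trans hle
  refine le_csInf (exists_pos_eigenvalue hA_nonneg hA) fun c ⟨hc, v, hv, hAv⟩ => ?_
  have hsymm := (A.nonneg_iff_isPositive.mp hA_nonneg).isSymmetric
  have hvB : v ∈ B.kerᗮ := Submodule.orthogonal_le hker <|
    mem_orthogonal_ker_of_apply_eq_smul hsymm (Complex.ofReal_ne_zero.mpr hc.ne') hAv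
  refine le_of_mul_le_mul_right ?_ (show 0 < ‖v‖ ^ 2 by positivity)
  calc a * minNonzeroEig B * ‖v‖ ^ 2
      = a * (minNonzeroEig B * ‖v‖ ^ 2) := mul_assoc _ _ _
    _ ≤ a * B.reApplyInnerSelf v := by gcongr; exact minNonzeroEig_mul_norm_sq_le hB hvB
    _ = (a • B).reApplyInnerSelf v := by
      simp [ContinuousLinearMap.reApplyInnerSelf_apply]
    _ ≤ A.reApplyInnerSelf v := reApplyInnerSelf_le_of_le hle v
    _ = c * ‖v‖ ^ 2 := by
      rw [ContinuousLinearMap.reApplyInnerSelf_apply, hAv, inner_smul_left, Complex.conj_ofReal]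
      simp [inner_self_eq_norm_sq_to_K, ← Complex.ofReal_pow]

end SpectralGap

section Segments

variable {n : ℕ} [NeZero n]

theorem forall_of_forall_add_one {p : Fin n → Prop} {a : Fin n} (ha : p a)
    (hadd : ∀ i, p i → p (i + 1)) (i : Fin n) : p i := by
  have hnat : ∀ m : ℕ, p (a + m) := fun m => by
    induction m with
    | zero => simpa using ha
    | succ m ih => simpa [add_assoc] using hadd _ ih
  simpa using hnat (i - a : Fin n)

theorem eq_or_eq_add_of_add_natCast_eq {a : Fin n} {x y : ℕ} (hx : x < n) (hy : y < 2 * n)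
    (h : a + (x : Fin n) = a + (y : Fin n)) : y = x ∨ y = x + n := by
  have hmod : x = y % n := by simpa [Nat.mod_eq_of_lt hx] using congrArg Fin.val (add_left_cancel h)
  have hdiv : y / n < 2 := Nat.div_lt_of_lt_mul (by lia)
  have hsplit := Nat.div_add_mod y n
  interval_cases y / n <;> lia

theorem mem_seg {a z : Fin n} {t : ℕ} : z ∈ seg a t ↔ ∃ k < t, a + (k : Fin n) = z := by
  simp [seg]

theorem bondIn_seg {a : Fin n} {t k : ℕ} (hk : k + 1 < t) : bondIn (a + (k : Fin n)) (seg a t) :=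
  ⟨mem_seg.mpr ⟨k, by lia, rfl⟩, mem_seg.mpr ⟨k + 1, hk, by simp [add_assoc]⟩⟩

theorem bondIn_seg_of_inter_nonempty {a c : Fin n} {t d y : ℕ} (htd : t ≤ d) (hdn : d + 2 * t ≤ n)
    (hleft : (seg c t ∩ seg a t).Nonempty) (hright : (seg (c + (d : Fin n)) t ∩ seg a t).Nonempty)
    (hty : t ≤ y + 1) (hyd : y < d) : bondIn (c + (y : Fin n)) (seg a t) := by
  obtain ⟨b, hbn, rfl⟩ : ∃ b < n, c + (b : Fin n) = a := ⟨(a - c : Fin n), Fin.is_lt _, by simp⟩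
  obtain ⟨z, hz⟩ := hleft
  obtain ⟨z', hz'⟩ := hright
  simp only [Finset.mem_inter, mem_seg, add_assoc, ← Nat.cast_add] at hz hz'
  obtain ⟨⟨u, hu, rfl⟩, w, hw, huw⟩ := hz
  obtain ⟨⟨u', hu', rfl⟩, w', hw', huw'⟩ := hz'
  have hoffset : b < t ∧ d < b + t := by
    rcases eq_or_eq_add_of_add_natCast_eq (by lia) (by lia) huw.symm with h | h <;>
    rcases eq_or_eq_add_of_add_natCast_eq (by lia) (by lia) huw'.symm with h' | h' <;> lia
  obtain ⟨k, rfl⟩ := Nat.exists_eq_add_of_le (show b ≤ y by lia)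
  rw [Nat.cast_add, ← add_assoc]
  exact bondIn_seg (by lia)

end Segments

namespace CoarseGraining

variable {n t : ℕ} [NeZero n]

theorem t_pos (G : CoarseGraining n t) : 0 < t := by
  refine Nat.pos_of_ne_zero fun ht => G.hMpos.ne' ?_
  rw [G.hM, ht, Nat.div_zero]

/- The blocks `[s_k, s_k + t + r_k)` are consecutive, so their union is closed under `i ↦ i + 1`. -/
theorem exists_mem_seg_add (G : CoarseGraining n t) (i : Fin n) :
    ∃ k, i ∈ seg (G.s k) (t + G.r k) := by
  have ht := G.t_pos
  have hfirst : ∃ k, G.s ⟨0, G.hMpos⟩ ∈ seg (G.s k) (t + G.r k) :=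
    ⟨⟨0, G.hMpos⟩, mem_seg.mpr ⟨0, by lia, by simp⟩⟩
  refine forall_of_forall_add_one (p := fun i => ∃ k, i ∈ seg (G.s k) (t + G.r k))
    hfirst (fun i ⟨k, hik⟩ => ?_) i
  obtain ⟨y, hy, rfl⟩ := mem_seg.mp hik
  rcases Nat.lt_or_ge (y + 1) (t + G.r k) with hlt | hge
  · exact ⟨k, (bondIn_seg hlt).2⟩
  · have hend : t + G.r k = y + 1 := by lia
    exact ⟨cyc k, mem_seg.mpr ⟨0, by lia, by simp [G.hs, hend, add_assoc]⟩⟩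

theorem r_eq_zero_of_T_eq_empty (G : CoarseGraining n t) (htn : t ≤ n) {k : Fin G.M}
    (hk : G.T k = ∅) : G.r k = 0 ∧ (G.s k : ℕ) + t = n := by
  obtain ⟨hk_last, hs_first, hs_last⟩ := G.hTempty k hk
  have hlast : (⟨G.M - 1, Nat.sub_lt G.hMpos one_pos⟩ : Fin G.M) = k := Fin.ext hk_last.symm
  have hcyc : cyc k = ⟨0, G.hMpos⟩ := by
    simp [cyc, hk_last, Nat.sub_add_cancel G.hMpos]
  have hwrap := congrArg Fin.val (G.hs k)
  have hr := G.hr k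
  have ht := G.t_pos
  rw [hlast] at hs_last
  rw [hcyc, hs_first, Fin.val_add, Fin.val_natCast, Nat.add_mod_mod, ← add_assoc, hs_last,
    Nat.add_mod_left, Nat.mod_eq_of_lt (by lia)] at hwrap
  exact ⟨hwrap.symm, hs_last⟩

theorem exists_bondIn_or_eq_last (G : CoarseGraining n t) (ht : 4 ≤ t) (htn : 4 * t ≤ n)
    (i : Fin n) : (∃ k, bondIn i (seg (G.s k) t)) ∨ (∃ k, bondIn i (G.T k)) ∨
      ∃ k, G.T k = ∅ ∧ (i : ℕ) = n - 1 := by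
  obtain ⟨k, hik⟩ := G.exists_mem_seg_add i
  obtain ⟨y, hy, rfl⟩ := mem_seg.mp hik
  have hr := G.hr k
  rcases Nat.lt_or_ge (y + 1) t with hyt | hyt
  · exact .inl ⟨k, bondIn_seg hyt⟩
  rcases eq_or_ne (G.T k) ∅ with hTk | hTk
  · obtain ⟨hrk, hsk⟩ := G.r_eq_zero_of_T_eq_empty (by lia) hTk
    refine .inr (.inr ⟨k, hTk, ?_⟩)
    rw [Fin.val_add, Fin.val_natCast, Nat.add_mod_mod, Nat.mod_eq_of_lt] <;> lia
  · obtain ⟨a, ha⟩ := (G.hT k).resolve_right hTk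
    have hoverlap : 0 < t / 4 := by lia
    have hleft := Finset.card_pos.mp (hoverlap.trans_le (G.hoverlap₁ k hTk))
    have hright := Finset.card_pos.mp (hoverlap.trans_le (G.hoverlap₂ k hTk))
    rw [ha] at hleft hright
    rw [G.hs] at hright
    refine .inr (.inl ⟨k, ha ▸ ?_⟩)
    exact bondIn_seg_of_inter_nonempty (by lia) (by lia) hleft hright hyt hy

end CoarseGraining

namespace ChainSetup

variable {n : ℕ} [NeZero n]

theorem Hbond_nonneg (C : ChainSetup n E) (i : Fin n) : 0 ≤ C.Hbond i :=
  Finset.sum_nonneg fun j _ => (C.P i j).nonneg_iff_isPositive.mpr <|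
    .of_isStarProjection ⟨(C.proj i j).2, (C.proj i j).1⟩

theorem hamOn_nonneg (C : ChainSetup n E) (F : Finset (Fin n)) : 0 ≤ C.hamOn F :=
  Finset.sum_nonneg fun i _ => C.Hbond_nonneg i

theorem hamOn_empty (C : ChainSetup n E) : C.hamOn ∅ = 0 := by
  simp [hamOn, bondIn]

theorem Hbond_le_hamOn (C : ChainSetup n E) {F : Finset (Fin n)} {i : Fin n} (hi : bondIn i F) :
    C.Hbond i ≤ C.hamOn F :=
  Finset.single_le_sum (fun i _ => C.Hbond_nonneg i)
    (Finset.mem_filter.mpr ⟨Finset.mem_univ i, hi⟩)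

theorem sum_hamOn_le_Hfull (C : ChainSetup n E) {ι : Type*} [Fintype ι] {F : ι → Finset (Fin n)}
    (hF : Pairwise fun k l => Disjoint (F k) (F l)) : ∑ k, C.hamOn (F k) ≤ C.Hfull := by
  simp only [hamOn]
  rw [← Finset.sum_biUnion]
  · exact Finset.sum_le_univ_sum_of_nonneg C.Hbond_nonneg
  · intro k _ l _ hkl
    refine Finset.disjoint_filter.mpr fun i _ hik hil => ?_
    exact Finset.disjoint_left.mp (hF hkl) hik.1 hil.1

theorem hamOn_le_Hfull (C : ChainSetup n E) (F : Finset (Fin n)) : C.hamOn F ≤ C.Hfull :=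
  Finset.sum_le_univ_sum_of_nonneg C.Hbond_nonneg

theorem Qproj_eq_starProjection (C : ChainSetup n E) (F : Finset (Fin n)) :
    C.Qproj F = (C.hamOn F).kerᗮ.starProjection := rfl

theorem Qproj_nonneg (C : ChainSetup n E) (F : Finset (Fin n)) : 0 ≤ C.Qproj F :=
  (C.Qproj F).nonneg_iff_isPositive.mpr <| .of_isStarProjection isStarProjection_starProjection

theorem ker_Qproj (C : ChainSetup n E) (F : Finset (Fin n)) :
    (C.Qproj F).ker = (C.hamOn F).ker := by
  rw [Qproj_eq_starProjection, Submodule.ker_starProjection, Submodule.orthogonal_orthogonal]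

theorem minNonzeroEig_smul_Qproj_le (C : ChainSetup n E) (F : Finset (Fin n)) :
    minNonzeroEig (C.hamOn F) • C.Qproj F ≤ C.hamOn F :=
  minNonzeroEig_smul_starProjection_le (C.hamOn_nonneg F)

theorem localGap_smul_Qproj_seg_le (C : ChainSetup n E) {openBC : Bool} {t : ℕ} {a : Fin n}
    (ha : openBC = true → (a : ℕ) + t ≤ n) :
    C.localGap openBC t • C.Qproj (seg a t) ≤ C.hamOn (seg a t) := by
  have hgap : C.localGap openBC t ≤ minNonzeroEig (C.hamOn (seg a t)) :=
    csInf_le ⟨0, fun _ ⟨_, _, hx⟩ => hx ▸ minNonzeroEig_nonneg _⟩ ⟨a, ha, rfl⟩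
  exact (smul_le_smul_of_nonneg_right hgap (C.Qproj_nonneg _)).trans
    (C.minNonzeroEig_smul_Qproj_le _)

theorem Hfull_ne_zero_of_localGap_pos (C : ChainSetup n E) {openBC : Bool} {t : ℕ}
    (hgap : 0 < C.localGap openBC t) : C.Hfull ≠ 0 := by
  intro hH
  refine hgap.not_ge (Real.sInf_nonpos fun _ ⟨a, _, hx⟩ => ?_)
  have hzero : C.hamOn (seg a t) = 0 := (hH ▸ C.hamOn_le_Hfull _).antisymm (C.hamOn_nonneg _)
  rw [hx, hzero, minNonzeroEig_zero]

theorem L_pos_of_Hfull_ne_zero (C : ChainSetup n E) (hH : C.Hfull ≠ 0) : 0 < C.L := by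
  obtain ⟨i, _, hi⟩ := Finset.exists_ne_zero_of_sum_ne_zero hH
  obtain ⟨j, _, _⟩ := Finset.exists_ne_zero_of_sum_ne_zero hi
  exact (C.layer ⟨i, j⟩).pos

variable {t : ℕ}

theorem Qproj_add_Qproj_le_coarseHam (C : ChainSetup n E) (G : CoarseGraining n t) (k : Fin G.M) :
    C.Qproj (seg (G.s k) t) + C.Qproj (G.T k) ≤ C.coarseHam t G :=
  Finset.single_le_sum (f := fun k => C.Qproj (seg (G.s k) t) + C.Qproj (G.T k))
    (fun _ _ => add_nonneg (C.Qproj_nonneg _) (C.Qproj_nonneg _)) (Finset.mem_univ k)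

theorem Qproj_seg_le_coarseHam (C : ChainSetup n E) (G : CoarseGraining n t) (k : Fin G.M) :
    C.Qproj (seg (G.s k) t) ≤ C.coarseHam t G :=
  (le_add_of_nonneg_right (C.Qproj_nonneg _)).trans (C.Qproj_add_Qproj_le_coarseHam G k)

theorem Qproj_T_le_coarseHam (C : ChainSetup n E) (G : CoarseGraining n t) (k : Fin G.M) :
    C.Qproj (G.T k) ≤ C.coarseHam t G :=
  (le_add_of_nonneg_left (C.Qproj_nonneg _)).trans (C.Qproj_add_Qproj_le_coarseHam G k)

theorem coarseHam_nonneg (C : ChainSetup n E) (G : CoarseGraining n t) : 0 ≤ C.coarseHam t G :=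
  Finset.sum_nonneg fun _ _ => add_nonneg (C.Qproj_nonneg _) (C.Qproj_nonneg _)

theorem localGap_smul_coarseHam_le (C : ChainSetup n E) (G : CoarseGraining n t) {openBC : Bool}
    (hS : openBC = true → ∀ k, (G.s k : ℕ) + t ≤ n)
    (hT : openBC = true → ∀ k (a : Fin n), G.T k = seg a t → (a : ℕ) + t ≤ n) :
    C.localGap openBC t • C.coarseHam t G ≤ (2 : ℝ) • C.Hfull := by
  have hQT (k) : C.localGap openBC t • C.Qproj (G.T k) ≤ C.hamOn (G.T k) := by
    rcases G.hT k with ⟨a, ha⟩ | hk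
    · exact ha ▸ C.localGap_smul_Qproj_seg_le fun h => hT h k a ha
    · simp [hk, Qproj_eq_starProjection, hamOn_empty]
  rw [coarseHam, Finset.sum_add_distrib, smul_add, Finset.smul_sum, Finset.smul_sum, two_smul]
  exact add_le_add
    ((Finset.sum_le_sum fun k _ => C.localGap_smul_Qproj_seg_le fun h => hS h k).trans
      (C.sum_hamOn_le_Hfull G.hSdisj))
    ((Finset.sum_le_sum fun k _ => hQT k).trans (C.sum_hamOn_le_Hfull G.hTdisj))

theorem ker_coarseHam_le_ker_Hbond (C : ChainSetup n E) (G : CoarseGraining n t) {i : Fin n}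
    {F : Finset (Fin n)} (hF : C.Qproj F ≤ C.coarseHam t G) (hi : bondIn i F) :
    (C.coarseHam t G).ker ≤ (C.Hbond i).ker :=
  calc (C.coarseHam t G).ker
      ≤ (C.Qproj F).ker := ker_le_ker_of_nonneg_of_le (C.Qproj_nonneg F) hF
    _ = (C.hamOn F).ker := C.ker_Qproj F
    _ ≤ (C.Hbond i).ker := ker_le_ker_of_nonneg_of_le (C.Hbond_nonneg i) (C.Hbond_le_hamOn hi)

theorem ker_coarseHam_le_ker_Hfull (C : ChainSetup n E) (G : CoarseGraining n t) (ht : 4 ≤ t)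
    (htn : 4 * t ≤ n)
    (hlast : ∀ k, G.T k = ∅ → ∀ i : Fin n, (i : ℕ) = n - 1 → C.Hbond i = 0) :
    (C.coarseHam t G).ker ≤ C.Hfull.ker := by
  intro v hv
  suffices hbond : ∀ i, C.Hbond i v = 0 by
    simp [Hfull, hbond]
  intro i
  rcases G.exists_bondIn_or_eq_last ht htn i with ⟨k, hk⟩ | ⟨k, hk⟩ | ⟨k, hk, hi⟩
  · exact C.ker_coarseHam_le_ker_Hbond G (C.Qproj_seg_le_coarseHam G k) hk hv
  · exact C.ker_coarseHam_le_ker_Hbond G (C.Qproj_T_le_coarseHam G k) hk hv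
  · simp [hlast k hk i hi]

end ChainSetup

theorem stmt_12_general {n : ℕ} [NeZero n] (C : ChainSetup n E)
    (t : ℕ) (ht : 4 ≤ t) (htn : 4 * t ≤ n)
    (G : CoarseGraining n t)
    (openBC : Bool)
    (hopen : openBC = true → C.Hbond ⟨n - 1, by lia⟩ = 0)
    (hopenSeg : openBC = true →
      (∀ k, (G.s k : ℕ) + t ≤ n) ∧ ∀ k (a : Fin n), G.T k = seg a t → (a : ℕ) + t ≤ n)
    (hTopen : ∀ k, G.T k = ∅ → openBC = true)
    (hγt : 0 < C.localGap openBC t) :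
    minNonzeroEig (C.coarseHam t G) ≤ 2 * C.gap / C.localGap openBC t := by
  have hker : (C.coarseHam t G).ker ≤ C.Hfull.ker :=
    C.ker_coarseHam_le_ker_Hfull G ht htn fun k hk i hi => by
      rw [show i = ⟨n - 1, _⟩ from Fin.ext hi]
      exact hopen (hTopen k hk)
  have hle : C.localGap openBC t • C.coarseHam t G ≤ (2 : ℝ) • C.Hfull :=
    C.localGap_smul_coarseHam_le G (fun h => (hopenSeg h).1) fun h => (hopenSeg h).2
  have hhalf : (C.localGap openBC t / 2) • C.coarseHam t G ≤ C.Hfull := by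
    rwa [div_eq_inv_mul, mul_smul, inv_smul_le_iff_of_pos two_pos]
  have hgap : C.localGap openBC t / 2 * minNonzeroEig (C.coarseHam t G) ≤ C.gap :=
    mul_minNonzeroEig_le_of_smul_le (by positivity) (C.coarseHam_nonneg G)
      (C.Hfull_ne_zero_of_localGap_pos hγt) hker hhalf
  rw [le_div_iff₀ hγt]
  linarith

/-- for a frustration-free chain Hamiltonian as in the setup with spectral
gap `γ` and local gaps `γ(t)`, and a coarse-grained Hamiltonian `H̄(t)` with spectral gap
`γ(H̄(t))` for a coarse-graining parameter `8L² < t < n/5`: if `γ(t) > 0` then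
`γ(H̄(t)) ≤ 2γ/γ(t)`. -/
theorem stmt_12 {n : ℕ} [NeZero n] (C : ChainSetup n E)
    (t : ℕ) (ht1 : 8 * C.L ^ 2 < t) (ht2 : 5 * t < n)
    (G : CoarseGraining n t)
    (openBC : Bool)
    (hopen : openBC = true → C.Hbond ⟨n - 1, by omega⟩ = 0)
    (hopenSeg : openBC = true →
      (∀ k, (G.s k : ℕ) + t ≤ n) ∧ ∀ k (a : Fin n), G.T k = seg a t → (a : ℕ) + t ≤ n)
    (hTopen : ∀ k, G.T k = ∅ → openBC = true)
    (hγt : 0 < C.localGap openBC t) :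
    minNonzeroEig (C.coarseHam t G) ≤ 2 * C.gap / C.localGap openBC t := by
  have hL : 0 < C.L := C.L_pos_of_Hfull_ne_zero (C.Hfull_ne_zero_of_localGap_pos hγt)
  exact stmt_12_general C t (by nlinarith) (by lia) G openBC hopen hopenSeg hTopen hγt
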